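/- Let β be a real constant and let w : ℝ → ℝ → ℝ be a smooth function of (x,t) with w_x(x,t) > 0 for all (x,t), satisfying the 4th potential Kupershmidt equation w_t = w_{5x} - 5·w_{xx}w_{4x}/w_x - (15/4)·w_{xxx}²/w_x + (65/4)·w_{xx}²w_{xxx}/w_x² - (135/16)·w_{xx}⁴/w_x³ + (5β/6)·(w_{xxx}/w_x - (7/4)·w_{xx}²/w_x²) - (5β²/36)·(1/w_x). Then h := -(4/3)·w_x^{-1/2} satisfies h_t = ∂_x[ h_{4x} - 5·h_xh_{xxx}/h + 5·h_x²h_{xx}/h² + (15β/32)·h²h_{xx} - (15β/32)·h·h_x² + (9β²/1024)·h⁵ ], where ∂_x denotes the partial derivative with respect to x of the bracketed expression. -/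

import Mathlib

/-!
Since `h = -(4/3) w_x^{-1/2}` is a negative smooth function, `w_x = (16/9) h⁻²`, so every
`x`-derivative of `w` is a rational expression in `h` and its `x`-derivatives. Substituting these,
the 4th potential Kupershmidt equation collapses to
`w_t = (16/9) (-2 h_{4x}/h³ + 4 h_x h_{xxx}/h⁴ + 3 h_{xx}²/h⁴ - 4 h_x² h_{xx}/h⁵)
  - (5β/6) (2 h_{xx}/h + h_x²/h²) - (5β²/64) h²`.
By equality of mixed partials (`dt_dx_comm`), the `x`-derivative of the right-hand side
equals `∂_t w_x = -(32/9) h⁻³ h_t`; solving for `h_t` yields the claim, an identity of rational functions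
in `h, h_x, …, h_{5x}`.
-/

/-- Total `x`-derivative of a function of `(x, t)`. -/
noncomputable def dx (f : ℝ → ℝ → ℝ) : ℝ → ℝ → ℝ := fun x t => deriv (fun y => f y t) x

/-- Total `t`-derivative of a function of `(x, t)`. -/
noncomputable def dt (f : ℝ → ℝ → ℝ) : ℝ → ℝ → ℝ := fun x t => deriv (fun s => f x s) t

/-- The 4th potential Kupershmidt equation with parameter `β`. -/
def Kup4 (β : ℝ) (w : ℝ → ℝ → ℝ) : Prop :=
  ∀ x t, dt w x t =
    dx (dx (dx (dx (dx w)))) x t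
    - 5 * dx (dx w) x t * dx (dx (dx (dx w))) x t / dx w x t
    - (15/4) * (dx (dx (dx w)) x t)^2 / dx w x t
    + (65/4) * (dx (dx w) x t)^2 * dx (dx (dx w)) x t / (dx w x t)^2
    - (135/16) * (dx (dx w) x t)^4 / (dx w x t)^3
    + (5*β/6) * (dx (dx (dx w)) x t / dx w x t - (7/4) * (dx (dx w) x t)^2 / (dx w x t)^2)
    - (5*β^2/36) * (1 / dx w x t)

/-- Joint smoothness of a function of `(x, t)` in curried form. -/
def Smooth2 (f : ℝ → ℝ → ℝ) : Prop := ContDiff ℝ (⊤ : ℕ∞) (fun p : ℝ × ℝ => f p.1 p.2)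

lemma Smooth2.hasDerivAt_fst {f : ℝ → ℝ → ℝ} (hf : Smooth2 f) (x t : ℝ) :
    HasDerivAt (fun y => f y t) (fderiv ℝ (fun p : ℝ × ℝ => f p.1 p.2) (x, t) (1, 0)) x := by
  have h1 : HasFDerivAt (fun p : ℝ × ℝ => f p.1 p.2) _ (x, t) :=
    (hf.differentiable (by simp) (x, t)).hasFDerivAt
  have h2 : HasDerivAt (fun y : ℝ => (y, t)) ((1 : ℝ), (0 : ℝ)) x :=
    (hasDerivAt_id x).prodMk (hasDerivAt_const x t)
  exact h1.comp_hasDerivAt x h2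

lemma Smooth2.hasDerivAt_snd {f : ℝ → ℝ → ℝ} (hf : Smooth2 f) (x t : ℝ) :
    HasDerivAt (fun s => f x s) (fderiv ℝ (fun p : ℝ × ℝ => f p.1 p.2) (x, t) (0, 1)) t := by
  have h1 : HasFDerivAt (fun p : ℝ × ℝ => f p.1 p.2) _ (x, t) :=
    (hf.differentiable (by simp) (x, t)).hasFDerivAt
  have h2 : HasDerivAt (fun s : ℝ => (x, s)) ((0 : ℝ), (1 : ℝ)) t :=
    (hasDerivAt_const t x).prodMk (hasDerivAt_id t)
  exact h1.comp_hasDerivAt t h2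

lemma Smooth2.dx_eq {f : ℝ → ℝ → ℝ} (hf : Smooth2 f) (x t : ℝ) :
    dx f x t = fderiv ℝ (fun p : ℝ × ℝ => f p.1 p.2) (x, t) (1, 0) :=
  (hf.hasDerivAt_fst x t).deriv

lemma Smooth2.dt_eq {f : ℝ → ℝ → ℝ} (hf : Smooth2 f) (x t : ℝ) :
    dt f x t = fderiv ℝ (fun p : ℝ × ℝ => f p.1 p.2) (x, t) (0, 1) :=
  (hf.hasDerivAt_snd x t).deriv

lemma Smooth2.hasDerivAt_dx {f : ℝ → ℝ → ℝ} (hf : Smooth2 f) (x t : ℝ) :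
    HasDerivAt (fun y => f y t) (dx f x t) x :=
  (hf.hasDerivAt_fst x t).differentiableAt.hasDerivAt

lemma Smooth2.hasDerivAt_dt {f : ℝ → ℝ → ℝ} (hf : Smooth2 f) (x t : ℝ) :
    HasDerivAt (fun s => f x s) (dt f x t) t :=
  (hf.hasDerivAt_snd x t).differentiableAt.hasDerivAt

lemma Smooth2.contDiff_fderiv {f : ℝ → ℝ → ℝ} (hf : Smooth2 f) :
    ContDiff ℝ (⊤ : ℕ∞) (fderiv ℝ (fun p : ℝ × ℝ => f p.1 p.2)) :=
  ContDiff.fderiv_right hf (by simp)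

lemma Smooth2.dx {f : ℝ → ℝ → ℝ} (hf : Smooth2 f) : Smooth2 (dx f) := by
  have : (fun p : ℝ × ℝ => _root_.dx f p.1 p.2)
      = fun p => fderiv ℝ (fun p : ℝ × ℝ => f p.1 p.2) p (1, 0) :=
    funext fun p => hf.dx_eq p.1 p.2
  unfold Smooth2
  rw [this]
  exact hf.contDiff_fderiv.clm_apply contDiff_const

lemma Smooth2.dt {f : ℝ → ℝ → ℝ} (hf : Smooth2 f) : Smooth2 (dt f) := by
  have : (fun p : ℝ × ℝ => _root_.dt f p.1 p.2)
      = fun p => fderiv ℝ (fun p : ℝ × ℝ => f p.1 p.2) p (0, 1) :=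
    funext fun p => hf.dt_eq p.1 p.2
  unfold Smooth2
  rw [this]
  exact hf.contDiff_fderiv.clm_apply contDiff_const

lemma dt_dx_comm {f : ℝ → ℝ → ℝ} (hf : Smooth2 f) (x t : ℝ) :
    dt (dx f) x t = dx (dt f) x t := by
  have hd := (hf.contDiff_fderiv.differentiable (by simp) (x, t))
  have e1 : (fun p : ℝ × ℝ => dx f p.1 p.2)
      = fun p => fderiv ℝ (fun p : ℝ × ℝ => f p.1 p.2) p (1, 0) :=
    funext fun p => hf.dx_eq p.1 p.2
  have e2 : (fun p : ℝ × ℝ => dt f p.1 p.2)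
      = fun p => fderiv ℝ (fun p : ℝ × ℝ => f p.1 p.2) p (0, 1) :=
    funext fun p => hf.dt_eq p.1 p.2
  have hs : IsSymmSndFDerivAt ℝ (fun p : ℝ × ℝ => f p.1 p.2) (x, t) :=
    ContDiffAt.isSymmSndFDerivAt (ContDiff.contDiffAt hf)
      (by simpa using (by exact_mod_cast le_top : ((2 : ℕ∞) : WithTop ℕ∞) ≤ ((⊤ : ℕ∞) : WithTop ℕ∞)))
  rw [hf.dx.dt_eq, hf.dt.dx_eq, e1, e2, fderiv_clm_apply hd (differentiableAt_const _),
    fderiv_clm_apply hd (differentiableAt_const _)]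
  simpa using hs.eq (0, 1) (1, 0)

/-- If `w` solves the 4th potential Kupershmidt equation with `w_x > 0`, then
`h = -(4/3)w_x^{-1/2}` solves the `x`-differentiated 5th potential Kupershmidt equation. -/
theorem kup4_to_kup5_potentialisation
    (β : ℝ)
    (w : ℝ → ℝ → ℝ)
    (hw : ContDiff ℝ (⊤ : ℕ∞) (fun p : ℝ × ℝ => w p.1 p.2))
    (hwx : ∀ x t, 0 < dx w x t)
    (heq : Kup4 β w)
    (h : ℝ → ℝ → ℝ)
    (hh : ∀ x t, h x t = -(4/3) * (dx w x t) ^ (-(1/2) : ℝ)) :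
    ∀ x t, dt h x t =
      dx (fun x t =>
        dx (dx (dx (dx h))) x t
        - 5 * dx h x t * dx (dx (dx h)) x t / h x t
        + 5 * (dx h x t)^2 * dx (dx h) x t / (h x t)^2
        + (15*β/32) * (h x t)^2 * dx (dx h) x t
        - (15*β/32) * h x t * (dx h x t)^2
        + (9*β^2/1024) * (h x t)^5) x t := by
  have hw : Smooth2 w := hw
  have hneg : ∀ x t, h x t < 0 := by
    intro x t
    rw [hh]
    have := Real.rpow_pos_of_pos (hwx x t) (-(1/2))
    linarith
  have h0 : ∀ x t, h x t ≠ 0 := fun x t => (hneg x t).ne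
  have w1 : dx w = fun x t => (16/9) / (h x t)^2 := by
    funext x t
    have hp := hwx x t
    have e : ((dx w x t) ^ (-(1/2) : ℝ)) ^ 2 = (dx w x t)⁻¹ := by
      rw [← Real.rpow_natCast, ← Real.rpow_mul hp.le, ← Real.rpow_neg_one]
      norm_num
    rw [hh, mul_pow, e]
    field_simp
    norm_num
  have s0 : Smooth2 h := by
    have e : (fun p : ℝ × ℝ => h p.1 p.2)
        = fun p => -(4/3) * (dx w p.1 p.2) ^ (-(1/2) : ℝ) := funext fun p => hh p.1 p.2
    unfold Smooth2
    rw [e]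
    exact contDiff_const.mul
      (ContDiff.rpow_const_of_ne hw.dx fun p => (hwx p.1 p.2).ne')
  have d0 := s0.hasDerivAt_dx
  have d1 := s0.dx.hasDerivAt_dx
  have d2 := s0.dx.dx.hasDerivAt_dx
  have d3 := s0.dx.dx.dx.hasDerivAt_dx
  have d4 := s0.dx.dx.dx.dx.hasDerivAt_dx
  have w2 : dx (dx w) = fun x t => (16/9) * (-2 * dx h x t / (h x t)^3) := by
    funext x t
    rw [w1]
    refine (((hasDerivAt_const x (16/9 : ℝ)).div ((d0 x t).pow 2)
      (pow_ne_zero _ (h0 x t))).congr_deriv ?_).deriv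
    have := h0 x t
    simp only [Pi.pow_apply]
    field_simp
    ring
  have w3 : dx (dx (dx w)) = fun x t => (16/9) *
      (-2 * dx (dx h) x t / (h x t)^3 + 6 * (dx h x t)^2 / (h x t)^4) := by
    funext x t
    rw [w2]
    refine (((((d1 x t).const_mul (-2)).div ((d0 x t).pow 3)
      (pow_ne_zero _ (h0 x t))).const_mul (16/9)).congr_deriv ?_).deriv
    have := h0 x t
    simp only [Pi.pow_apply]
    field_simp
    ring
  have w4 : dx (dx (dx (dx w))) = fun x t => (16/9) *
      (-2 * dx (dx (dx h)) x t / (h x t)^3 + 18 * (dx h x t * dx (dx h) x t) / (h x t)^4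
        - 24 * (dx h x t)^3 / (h x t)^5) := by
    funext x t
    rw [w3]
    refine ((((((d2 x t).const_mul (-2)).div ((d0 x t).pow 3) (pow_ne_zero _ (h0 x t))).add
      ((((d1 x t).pow 2).const_mul 6).div ((d0 x t).pow 4)
      (pow_ne_zero _ (h0 x t)))).const_mul (16/9)).congr_deriv ?_).deriv
    have := h0 x t
    simp only [Pi.pow_apply]
    field_simp
    ring
  have w5 : dx (dx (dx (dx (dx w)))) = fun x t => (16/9) *
      (-2 * dx (dx (dx (dx h))) x t / (h x t)^3
        + 24 * (dx h x t * dx (dx (dx h)) x t) / (h x t)^4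
        + 18 * (dx (dx h) x t)^2 / (h x t)^4
        - 144 * ((dx h x t)^2 * dx (dx h) x t) / (h x t)^5
        + 120 * (dx h x t)^4 / (h x t)^6) := by
    funext x t
    rw [w4]
    refine (((((((d3 x t).const_mul (-2)).div ((d0 x t).pow 3) (pow_ne_zero _ (h0 x t))).add
      ((((d1 x t).mul (d2 x t)).const_mul 18).div ((d0 x t).pow 4)
      (pow_ne_zero _ (h0 x t)))).sub
      ((((d1 x t).pow 3).const_mul 24).div ((d0 x t).pow 5)
      (pow_ne_zero _ (h0 x t)))).const_mul (16/9)).congr_deriv ?_).deriv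
    have := h0 x t
    simp only [Pi.pow_apply, Pi.mul_apply]
    field_simp
    ring
  have wt : dt w = fun x t => (16/9) *
      (-2 * dx (dx (dx (dx h))) x t / (h x t)^3
        + 4 * (dx h x t * dx (dx (dx h)) x t) / (h x t)^4
        + 3 * (dx (dx h) x t)^2 / (h x t)^4
        - 4 * ((dx h x t)^2 * dx (dx h) x t) / (h x t)^5)
      - (5*β/6) * (2 * dx (dx h) x t / h x t + (dx h x t)^2 / (h x t)^2)
      - (5*β^2/64) * (h x t)^2 := by
    funext x t
    rw [heq x t, w5, w4, w3, w2, w1]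
    have := h0 x t
    field_simp
    ring
  intro x t
  have hx := h0 x t
  have key := dt_dx_comm hw x t
  -- `∂_t w_x` computed from `w_x = (16/9) h⁻²`
  have lhs : dt (dx w) x t = -(32/9) * dt h x t / (h x t)^3 := by
    rw [w1]
    refine (((hasDerivAt_const t (16/9 : ℝ)).div ((s0.hasDerivAt_dt x t).pow 2)
      (pow_ne_zero _ hx)).congr_deriv ?_).deriv
    simp only [Pi.pow_apply]
    field_simp
    ring
  -- `∂_x w_t` computed from the collapsed equation
  have rhs := (((((((((d4 x t).const_mul (-2)).div ((d0 x t).pow 3) (pow_ne_zero _ hx)).add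
      ((((d1 x t).mul (d3 x t)).const_mul 4).div ((d0 x t).pow 4) (pow_ne_zero _ hx))).add
      ((((d2 x t).pow 2).const_mul 3).div ((d0 x t).pow 4) (pow_ne_zero _ hx))).sub
      (((((d1 x t).pow 2).mul (d2 x t)).const_mul 4).div ((d0 x t).pow 5)
        (pow_ne_zero _ hx))).const_mul (16/9)).sub
      (((((d2 x t).const_mul 2).div (d0 x t) hx).add
        (((d1 x t).pow 2).div ((d0 x t).pow 2) (pow_ne_zero _ hx))).const_mul (5*β/6))).sub
      (((d0 x t).pow 2).const_mul (5*β^2/64))).deriv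
  rw [lhs, wt] at key
  replace key := key.trans rhs
  have key2 : dt h x t = -(9/32) * (h x t)^3 * (-(32/9) * dt h x t / (h x t)^3) := by
    field_simp
  rw [key2, key]
  symm
  refine ((((((((d4 x t).sub ((((d1 x t).const_mul 5).mul (d3 x t)).div (d0 x t) hx)).add
    (((((d1 x t).pow 2).const_mul 5).mul (d2 x t)).div ((d0 x t).pow 2)
      (pow_ne_zero _ hx))).add
    ((((d0 x t).pow 2).const_mul (15*β/32)).mul (d2 x t))).sub
    (((d0 x t).const_mul (15*β/32)).mul ((d1 x t).pow 2))).add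
    (((d0 x t).pow 5).const_mul (9*β^2/1024)))).congr_deriv ?_).deriv
  simp only [Pi.pow_apply, Pi.mul_apply]
  field_simp
  ring
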